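/- Suppose the Assumptions hold and d₁ ≠ d₂. Then: (i) X contains points z with x(z) = x(a) and y(z) < y(a); let r be such a point with y(r) maximal; (ii) X contains points z with y(z) = y(a) and x(z) > x(a); let s be such a point with x(s) minimal; (iii) (r,s) is a blue arrow; (iv) there exists r' ∈ X with r' ≠ r such that {r,r'} is a decreasing pair and (r',s) is a blue arrow. -/

import Mathlib

noncomputable section
open Classical

/-- The L1 (Manhattan) metric on ℝ². -/
def rho (u v : ℝ × ℝ) : ℝ := |u.1 - v.1| + |u.2 - v.2|

/-- `z` is between `u` and `v` (w.r.t. the L1 metric): the three points are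
pairwise distinct and `ρ(u,v) = ρ(u,z) + ρ(z,v)`. -/
def MBtw (u z v : ℝ × ℝ) : Prop :=
  u ≠ z ∧ z ≠ v ∧ u ≠ v ∧ rho u v = rho u z + rho z v

/-- The line of `X` induced by distinct points `u, v`. -/
def lineThrough (X : Finset (ℝ × ℝ)) (u v : ℝ × ℝ) : Finset (ℝ × ℝ) :=
  X.filter fun z => z = u ∨ z = v ∨ MBtw u z v ∨ MBtw z u v ∨ MBtw u v z

/-- `X` is non-collinear: no line induced by two distinct points of `X` equals `X`. -/
def NonCollinear (X : Finset (ℝ × ℝ)) : Prop :=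
  ∀ u ∈ X, ∀ v ∈ X, u ≠ v → lineThrough X u v ≠ X

/-- `{p,q}` is an increasing pair. -/
def IncPair (p q : ℝ × ℝ) : Prop := 0 < (q.1 - p.1) * (q.2 - p.2)

/-- `{p,q}` is a decreasing pair. -/
def DecPair (p q : ℝ × ℝ) : Prop := (q.1 - p.1) * (q.2 - p.2) < 0

/-- The partial order `≤_I`. -/
def leI (c d : ℝ × ℝ) : Prop := c.1 ≤ d.1 ∧ c.2 ≤ d.2

/-- `c <_I d`. -/
def ltI (c d : ℝ × ℝ) : Prop := leI c d ∧ c ≠ d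

/-- The partial order `≤_D`. -/
def leD (c d : ℝ × ℝ) : Prop := c.1 ≤ d.1 ∧ d.2 ≤ c.2

/-- `c <_D d`. -/
def ltD (c d : ℝ × ℝ) : Prop := leD c d ∧ c ≠ d

/-- `(p,q)` is a blue arrow of `X`. -/
def BlueArrow (X : Finset (ℝ × ℝ)) (p q : ℝ × ℝ) : Prop :=
  p ∈ X ∧ q ∈ X ∧ IncPair p q ∧ ltI p q ∧
  ∀ a b, a ∈ X → b ∈ X → IncPair a b → ltI a b →
    lineThrough X a b = lineThrough X p q → (ltI q b ∨ (q = b ∧ leI a p))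

/-- `(p,q)` is a red arrow of `X`. -/
def RedArrow (X : Finset (ℝ × ℝ)) (p q : ℝ × ℝ) : Prop :=
  p ∈ X ∧ q ∈ X ∧ DecPair p q ∧ ltD p q ∧
  ∀ a b, a ∈ X → b ∈ X → DecPair a b → ltD a b →
    lineThrough X a b = lineThrough X p q → (ltD q b ∨ (q = b ∧ leD a p))

/-- An arrow is a blue or a red arrow. -/
def Arrow (X : Finset (ℝ × ℝ)) (p q : ℝ × ℝ) : Prop :=
  BlueArrow X p q ∨ RedArrow X p q

/-- `a` is not an endpoint of any arrow of `X`. -/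
def NotEndpoint (X : Finset (ℝ × ℝ)) (a : ℝ × ℝ) : Prop :=
  ∀ p q, Arrow X p q → a ≠ p ∧ a ≠ q


/-- Coordinate form of membership in the line of a decreasing pair. -/
def InD (u v z : ℝ × ℝ) : Prop :=
  (z.1 ≤ u.1 ∧ u.2 ≤ z.2) ∨ (u.1 ≤ z.1 ∧ z.2 ≤ u.2 ∧ z.1 ≤ v.1 ∧ v.2 ≤ z.2) ∨
    (v.1 ≤ z.1 ∧ z.2 ≤ v.2)

/-- Coordinate form of membership in the line of an increasing pair. -/
def InI (u v z : ℝ × ℝ) : Prop :=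
  (z.1 ≤ u.1 ∧ z.2 ≤ u.2) ∨ (u.1 ≤ z.1 ∧ u.2 ≤ z.2 ∧ z.1 ≤ v.1 ∧ z.2 ≤ v.2) ∨
    (v.1 ≤ z.1 ∧ v.2 ≤ z.2)

lemma abs_btw (a z b : ℝ) :
    |a - b| = |a - z| + |z - b| ↔ (a ≤ z ∧ z ≤ b) ∨ (b ≤ z ∧ z ≤ a) := by
  constructor
  · intro h
    by_contra hc
    rcases le_total a b with h1 | h1 <;> rcases le_total a z with h2 | h2 <;>
      rcases le_total z b with h3 | h3 <;>
      simp only [h1, h2, h3, abs_of_nonneg, abs_of_nonpos, sub_nonneg, sub_nonpos] at h <;>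
      first
      | exact hc (Or.inl ⟨by linarith, by linarith⟩)
      | exact hc (Or.inr ⟨by linarith, by linarith⟩)
  · rintro (⟨h1, h2⟩ | ⟨h1, h2⟩)
    · rw [abs_of_nonpos, abs_of_nonpos, abs_of_nonpos] <;> linarith
    · rw [abs_of_nonneg, abs_of_nonneg, abs_of_nonneg] <;> linarith

lemma rho_btw (u z v : ℝ × ℝ) :
    rho u v = rho u z + rho z v ↔
      ((u.1 ≤ z.1 ∧ z.1 ≤ v.1) ∨ (v.1 ≤ z.1 ∧ z.1 ≤ u.1)) ∧
      ((u.2 ≤ z.2 ∧ z.2 ≤ v.2) ∨ (v.2 ≤ z.2 ∧ z.2 ≤ u.2)) := by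
  rw [← abs_btw, ← abs_btw]
  unfold rho
  have h1 := abs_sub_le u.1 z.1 v.1
  have h2 := abs_sub_le u.2 z.2 v.2
  constructor
  · intro h
    exact ⟨by linarith, by linarith⟩
  · rintro ⟨h3, h4⟩
    linarith

lemma mem_line {X : Finset (ℝ × ℝ)} {u v z : ℝ × ℝ} (huv : u ≠ v) :
    z ∈ lineThrough X u v ↔ z ∈ X ∧
      (rho u v = rho u z + rho z v ∨ rho z v = rho z u + rho u v ∨
        rho u z = rho u v + rho v z) := by
  unfold lineThrough
  rw [Finset.mem_filter]
  unfold MBtw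
  refine and_congr_right fun _ => ?_
  by_cases h1 : z = u
  · subst h1
    simp [rho]
  by_cases h2 : z = v
  · subst h2
    simp [rho]
  have h3 : u ≠ z := fun h => h1 h.symm
  have h4 : v ≠ z := fun h => h2 h.symm
  simp only [h1, h2, h3, h4, huv, ne_eq, not_false_eq_true, true_and, false_or]

lemma mem_line_D {X : Finset (ℝ × ℝ)} {u v z : ℝ × ℝ} (h1 : u.1 < v.1) (h2 : v.2 < u.2) :
    z ∈ lineThrough X u v ↔ z ∈ X ∧ InD u v z := by
  rw [mem_line (by rintro rfl; exact lt_irrefl _ h1)]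
  refine and_congr_right fun _ => ?_
  simp only [rho_btw, InD]
  grind

lemma mem_line_I {X : Finset (ℝ × ℝ)} {u v z : ℝ × ℝ} (h1 : u.1 < v.1) (h2 : u.2 < v.2) :
    z ∈ lineThrough X u v ↔ z ∈ X ∧ InI u v z := by
  rw [mem_line (by rintro rfl; exact lt_irrefl _ h1)]
  refine and_congr_right fun _ => ?_
  simp only [rho_btw, InI]
  grind

lemma line_D_iff {X : Finset (ℝ × ℝ)} {u v p q : ℝ × ℝ} (h1 : u.1 < v.1) (h2 : v.2 < u.2)
    (h3 : p.1 < q.1) (h4 : q.2 < p.2) :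
    lineThrough X u v = lineThrough X p q ↔ ∀ z ∈ X, (InD u v z ↔ InD p q z) := by
  rw [Finset.ext_iff]
  simp only [mem_line_D h1 h2, mem_line_D h3 h4]
  exact ⟨fun h z hz => by simpa [hz] using h z, fun h z => and_congr_right (h z)⟩

lemma line_I_iff {X : Finset (ℝ × ℝ)} {u v p q : ℝ × ℝ} (h1 : u.1 < v.1) (h2 : u.2 < v.2)
    (h3 : p.1 < q.1) (h4 : p.2 < q.2) :
    lineThrough X u v = lineThrough X p q ↔ ∀ z ∈ X, (InI u v z ↔ InI p q z) := by
  rw [Finset.ext_iff]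
  simp only [mem_line_I h1 h2, mem_line_I h3 h4]
  exact ⟨fun h z hz => by simpa [hz] using h z, fun h z => and_congr_right (h z)⟩

lemma horiz {X : Finset (ℝ × ℝ)} (hnc : NonCollinear X) {p q : ℝ × ℝ} (hp : p ∈ X) (hq : q ∈ X)
    (h1 : p.1 < q.1) (h2 : p.2 = q.2) : ∃ z ∈ X, p.1 < z.1 ∧ z.1 < q.1 ∧ z.2 ≠ p.2 := by
  have hpq : p ≠ q := by rintro rfl; exact lt_irrefl _ h1
  by_contra hc
  push Not at hc
  apply hnc p hp q hq hpq
  ext z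
  rw [mem_line hpq]
  refine ⟨fun h => h.1, fun h => ⟨h, ?_⟩⟩
  have := hc z h
  simp only [rho_btw]
  grind

lemma vert {X : Finset (ℝ × ℝ)} (hnc : NonCollinear X) {p q : ℝ × ℝ} (hp : p ∈ X) (hq : q ∈ X)
    (h1 : p.2 < q.2) (h2 : p.1 = q.1) : ∃ z ∈ X, p.2 < z.2 ∧ z.2 < q.2 ∧ z.1 ≠ p.1 := by
  have hpq : p ≠ q := by rintro rfl; exact lt_irrefl _ h1
  by_contra hc
  push Not at hc
  apply hnc p hp q hq hpq
  ext z
  rw [mem_line hpq]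
  refine ⟨fun h => h.1, fun h => ⟨h, ?_⟩⟩
  have := hc z h
  simp only [rho_btw]
  grind

lemma ne_coord {p q : ℝ × ℝ} (h : p ≠ q) : p.1 ≠ q.1 ∨ p.2 ≠ q.2 := by
  by_contra hc
  push Not at hc
  exact h (Prod.ext hc.1 hc.2)

lemma incI {p q : ℝ × ℝ} : (IncPair p q ∧ ltI p q) ↔ p.1 < q.1 ∧ p.2 < q.2 := by
  unfold IncPair ltI leI
  constructor
  · rintro ⟨h, ⟨h1, h2⟩, -⟩
    constructor
    · by_contra hc
      have : q.1 - p.1 = 0 := by linarith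
      rw [this] at h
      linarith
    · by_contra hc
      have : q.2 - p.2 = 0 := by linarith
      rw [this] at h
      linarith
  · rintro ⟨h1, h2⟩
    exact ⟨mul_pos (by linarith) (by linarith), ⟨h1.le, h2.le⟩, by rintro rfl; exact lt_irrefl _ h1⟩

lemma decD {p q : ℝ × ℝ} : (DecPair p q ∧ ltD p q) ↔ p.1 < q.1 ∧ q.2 < p.2 := by
  unfold DecPair ltD leD
  constructor
  · rintro ⟨h, ⟨h1, h2⟩, -⟩
    constructor
    · by_contra hc
      have : q.1 - p.1 = 0 := by linarith
      rw [this] at h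
      linarith
    · by_contra hc
      have : q.2 - p.2 = 0 := by linarith
      rw [this] at h
      linarith
  · rintro ⟨h1, h2⟩
    exact ⟨mul_neg_of_pos_of_neg (by linarith) (by linarith), ⟨h1.le, h2.le⟩,
      by rintro rfl; exact lt_irrefl _ h1⟩

lemma red_unpack {X : Finset (ℝ × ℝ)} {p q : ℝ × ℝ} (h : RedArrow X p q) :
    p ∈ X ∧ q ∈ X ∧ p.1 < q.1 ∧ q.2 < p.2 ∧
    ∀ u ∈ X, ∀ v ∈ X, u.1 < v.1 → v.2 < u.2 → (∀ z ∈ X, (InD u v z ↔ InD p q z)) →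
      q.1 ≤ v.1 ∧ v.2 ≤ q.2 ∧
        ((q.1 = v.1 ∧ q.2 = v.2 ∧ u.1 ≤ p.1 ∧ p.2 ≤ u.2) ∨ q.1 ≠ v.1 ∨ q.2 ≠ v.2) := by
  obtain ⟨hp, hq, h1, h2, h3⟩ := h
  obtain ⟨h4, h5⟩ := decD.1 ⟨h1, h2⟩
  refine ⟨hp, hq, h4, h5, fun u hu v hv h6 h7 h8 => ?_⟩
  have h9 := decD.2 ⟨h6, h7⟩
  rcases h3 u v hu hv h9.1 h9.2 ((line_D_iff h6 h7 h4 h5).2 h8) with ⟨⟨h, h'⟩, hn⟩ | ⟨rfl, h, h'⟩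
  · exact ⟨h, h', Or.inr (ne_coord hn)⟩
  · exact ⟨le_rfl, le_rfl, Or.inl ⟨rfl, rfl, h, h'⟩⟩

lemma blue_pack {X : Finset (ℝ × ℝ)} {p q : ℝ × ℝ} (hp : p ∈ X) (hq : q ∈ X)
    (h1 : p.1 < q.1) (h2 : p.2 < q.2)
    (H : ∀ u ∈ X, ∀ v ∈ X, u.1 < v.1 → u.2 < v.2 → (∀ z ∈ X, (InI u v z ↔ InI p q z)) →
      q.1 ≤ v.1 ∧ q.2 ≤ v.2 ∧
        (q.1 = v.1 → q.2 = v.2 → u.1 ≤ p.1 ∧ u.2 ≤ p.2)) : BlueArrow X p q := by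
  have h := incI.2 ⟨h1, h2⟩
  refine ⟨hp, hq, h.1, h.2, fun u v hu hv h3 h4 h5 => ?_⟩
  obtain ⟨h6, h7⟩ := incI.1 ⟨h3, h4⟩
  obtain ⟨h8, h9, h10⟩ := H u hu v hv h6 h7 ((line_I_iff h6 h7 h1 h2).1 h5)
  by_cases hqv : q = v
  · subst hqv
    exact Or.inr ⟨rfl, h10 rfl rfl⟩
  · exact Or.inl ⟨⟨h8, h9⟩, hqv⟩

/-- Among the generators with fixed second point there is a largest first point. -/
lemma blue_fix_v {X : Finset (ℝ × ℝ)} {p v : ℝ × ℝ} (hp : p ∈ X) (hv : v ∈ X)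
    (h1 : p.1 < v.1) (h2 : p.2 < v.2)
    (H : ∀ u ∈ X, ∀ w ∈ X, u.1 < w.1 → u.2 < w.2 → (∀ z ∈ X, (InI u w z ↔ InI p v z)) →
      v.1 ≤ w.1 ∧ v.2 ≤ w.2) :
    ∃ q ∈ X, q.1 < v.1 ∧ q.2 < v.2 ∧ (∀ z ∈ X, (InI q v z ↔ InI p v z)) ∧ BlueArrow X q v := by
  let S := X.filter fun u => u.1 < v.1 ∧ u.2 < v.2 ∧ ∀ z ∈ X, (InI u v z ↔ InI p v z)
  obtain ⟨q, hq, hmax⟩ := S.exists_max_image (fun u => u.1 + u.2)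
    ⟨p, Finset.mem_filter.2 ⟨hp, h1, h2, fun _ _ => Iff.rfl⟩⟩
  obtain ⟨hqX, h3, h4, h5⟩ := Finset.mem_filter.1 hq
  refine ⟨q, hqX, h3, h4, h5, blue_pack hqX hv h3 h4 fun u hu w hw h6 h7 h8 => ?_⟩
  have h9 : ∀ z ∈ X, (InI u w z ↔ InI p v z) := fun z hz => (h8 z hz).trans (h5 z hz)
  obtain ⟨h10, h11⟩ := H u hu w hw h6 h7 h9
  refine ⟨h10, h11, fun e1 e2 => ?_⟩
  have hvw : v = w := Prod.ext e1 e2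
  subst hvw
  have h12 := hmax u (Finset.mem_filter.2 ⟨hu, h6, h7, h9⟩)
  have h13 : InI q v u := (h8 u hu).1 (by unfold InI; grind)

  unfold InI at h13
  rcases h13 with h | h | h
  · exact h
  · constructor <;> linarith [h.1, h.2.1]
  · linarith [h.1]

/-- Among the generators with fixed first point there is a smallest second point. -/
lemma min_fix_u {X : Finset (ℝ × ℝ)} {a p : ℝ × ℝ} (hp : p ∈ X)
    (h1 : a.1 < p.1) (h2 : a.2 < p.2) :
    ∃ v ∈ X, a.1 < v.1 ∧ a.2 < v.2 ∧ (∀ z ∈ X, (InI a v z ↔ InI a p z)) ∧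
      ∀ w ∈ X, a.1 < w.1 → a.2 < w.2 → (∀ z ∈ X, (InI a w z ↔ InI a p z)) →
        v.1 ≤ w.1 ∧ v.2 ≤ w.2 := by
  let S := X.filter fun v => a.1 < v.1 ∧ a.2 < v.2 ∧ ∀ z ∈ X, (InI a v z ↔ InI a p z)
  obtain ⟨q, hq, hmin⟩ := S.exists_min_image (fun u => u.1 + u.2)
    ⟨p, Finset.mem_filter.2 ⟨hp, h1, h2, fun _ _ => Iff.rfl⟩⟩
  obtain ⟨hqX, h3, h4, h5⟩ := Finset.mem_filter.1 hq
  refine ⟨q, hqX, h3, h4, h5, fun w hw h6 h7 h8 => ?_⟩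
  have h12 := hmin w (Finset.mem_filter.2 ⟨hw, h6, h7, h8⟩)
  have h13 : InI a q w := (h5 w hw).2 ((h8 w hw).1 (by unfold InI; grind))

  unfold InI at h13
  rcases h13 with h | h | h
  · linarith [h.1]
  · constructor <;> linarith [h.2.2.1, h.2.2.2]
  · exact h

lemma d1_cases {X : Finset (ℝ × ℝ)} {a d₁ d₂ t₁ w₁ : ℝ × ℝ}
    (hnc : NonCollinear X) (haX : a ∈ X)
    (hQ2 : ∀ z ∈ X, ¬(z.1 < a.1 ∧ a.2 < z.2))
    (hd1X : d₁ ∈ X) (hd1 : a.1 < d₁.1 ∧ d₁.2 < a.2)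
    (hd1strip : ∀ z ∈ X, ¬(a.1 < z.1 ∧ d₁.2 < z.2 ∧ z.2 < a.2))
    (hd1seg : ∀ z ∈ X, ¬(a.1 < z.1 ∧ z.1 < d₁.1 ∧ z.2 = d₁.2))
    (hd2X : d₂ ∈ X) (hd2 : a.1 < d₂.1 ∧ d₂.2 < a.2)
    (h12 : d₂.1 < d₁.1 ∧ d₂.2 < d₁.2)
    (ht1 : RedArrow X t₁ w₁) (hat : a.1 ≠ t₁.1 ∨ a.2 ≠ t₁.2) (haw : a.1 ≠ w₁.1 ∨ a.2 ≠ w₁.2)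
    (hL : ∀ z ∈ X, (InD t₁ w₁ z ↔ InD a d₁ z)) :
    (t₁.2 = a.2 ∧ a.1 < t₁.1 ∧ t₁.1 < d₁.1 ∧ w₁.1 = d₁.1 ∧ w₁.2 = d₁.2) ∨
    (w₁.2 = a.2 ∧ a.1 < w₁.1 ∧ w₁.1 ≤ d₁.1 ∧ t₁.1 = a.1 ∧ a.2 < t₁.2) := by
  obtain ⟨htX, hwX, k1, k2, k3⟩ := red_unpack ht1
  obtain ⟨k4, k5, k6⟩ := k3 a haX d₁ hd1X hd1.1 hd1.2 fun z hz => (hL z hz).symm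
  have ea := (hL a haX).2 (by unfold InD; grind)
  have et := (hL t₁ htX).1 (by unfold InD; grind)
  have ew := (hL w₁ hwX).1 (by unfold InD; grind)
  have ed : ¬ InD t₁ w₁ d₂ := fun h => by
    have := (hL d₂ hd2X).1 h
    unfold InD at this
    grind
  have q1 := hQ2 t₁ htX
  have q2 := hQ2 w₁ hwX
  have s1 := hd1strip t₁ htX
  have s2 := hd1strip w₁ hwX
  have g1 := hd1seg t₁ htX
  have g2 := hd1seg w₁ hwX
  have hB : ¬ (t₁.1 = a.1 ∧ d₁.2 < t₁.2 ∧ t₁.2 < a.2) := by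
    rintro ⟨b1, b2, b3⟩
    obtain ⟨z, hz, z1, z2, z3⟩ := vert hnc htX haX b3 b1
    have := hL z hz
    have := hd1strip z hz
    unfold InD at *
    grind
  unfold InD at ea et ew ed
  grind

lemma d2_cases {X : Finset (ℝ × ℝ)} {a d₁ d₂ t₂ w₂ : ℝ × ℝ}
    (hnc : NonCollinear X) (haX : a ∈ X)
    (hQ2 : ∀ z ∈ X, ¬(z.1 < a.1 ∧ a.2 < z.2))
    (hd1X : d₁ ∈ X) (hd1 : a.1 < d₁.1 ∧ d₁.2 < a.2)
    (hd2X : d₂ ∈ X) (hd2 : a.1 < d₂.1 ∧ d₂.2 < a.2)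
    (hd2strip : ∀ z ∈ X, ¬(a.1 < z.1 ∧ z.1 < d₂.1 ∧ z.2 < a.2))
    (hd2seg : ∀ z ∈ X, ¬(z.1 = d₂.1 ∧ d₂.2 < z.2 ∧ z.2 < a.2))
    (h12 : d₂.1 < d₁.1 ∧ d₂.2 < d₁.2)
    (ht2 : RedArrow X t₂ w₂) (hat : a.1 ≠ t₂.1 ∨ a.2 ≠ t₂.2) (haw : a.1 ≠ w₂.1 ∨ a.2 ≠ w₂.2)
    (hL : ∀ z ∈ X, (InD t₂ w₂ z ↔ InD a d₂ z)) :
    (t₂.1 = a.1 ∧ t₂.2 < a.2 ∧ d₂.2 < t₂.2 ∧ w₂.1 = d₂.1 ∧ w₂.2 = d₂.2) ∨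
    (w₂.1 = a.1 ∧ w₂.2 < a.2 ∧ d₂.2 ≤ w₂.2 ∧ t₂.2 = a.2 ∧ t₂.1 < a.1) := by
  obtain ⟨htX, hwX, k1, k2, k3⟩ := red_unpack ht2
  obtain ⟨k4, k5, k6⟩ := k3 a haX d₂ hd2X hd2.1 hd2.2 fun z hz => (hL z hz).symm
  have ea := (hL a haX).2 (by unfold InD; grind)
  have et := (hL t₂ htX).1 (by unfold InD; grind)
  have ew := (hL w₂ hwX).1 (by unfold InD; grind)
  have ed : ¬ InD t₂ w₂ d₁ := fun h => by
    have := (hL d₁ hd1X).1 h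
    unfold InD at this
    grind
  have q1 := hQ2 t₂ htX
  have q2 := hQ2 w₂ hwX
  have s1 := hd2strip t₂ htX
  have s2 := hd2strip w₂ hwX
  have g1 := hd2seg t₂ htX
  have g2 := hd2seg w₂ hwX
  have hB : ¬ (t₂.2 = a.2 ∧ t₂.1 < d₂.1 ∧ a.1 < t₂.1) := by
    rintro ⟨b1, b2, b3⟩
    obtain ⟨z, hz, z1, z2, z3⟩ := horiz hnc haX htX b3 b1.symm
    have := hL z hz
    have := hd2strip z hz
    unfold InD at *
    grind
  unfold InD at ea et ew ed
  grind

/-- The case where `t₂` lies to the left of `a` and `w₂` below `a` is impossible. -/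
lemma no_left_case {X : Finset (ℝ × ℝ)} {a d₁ d₂ t₂ w₂ : ℝ × ℝ}
    (hnc : NonCollinear X) (haX : a ∈ X) (hiso : NotEndpoint X a)
    (hQ2 : ∀ z ∈ X, ¬(z.1 < a.1 ∧ a.2 < z.2))
    (hd1X : d₁ ∈ X) (hd1 : a.1 < d₁.1 ∧ d₁.2 < a.2)
    (hd2 : a.1 < d₂.1 ∧ d₂.2 < a.2)
    (h12 : d₂.1 < d₁.1 ∧ d₂.2 < d₁.2)
    (ht2 : RedArrow X t₂ w₂)
    (hL : ∀ z ∈ X, (InD t₂ w₂ z ↔ InD a d₂ z))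
    (E : ∀ z ∈ X, z.1 = a.1 → z.2 < a.2 → z.2 < d₁.2)
    (hC : w₂.1 = a.1 ∧ w₂.2 < a.2 ∧ d₂.2 ≤ w₂.2 ∧ t₂.2 = a.2 ∧ t₂.1 < a.1) : False := by
  obtain ⟨c1, c2, c3, c4, c5⟩ := hC
  obtain ⟨htX, hwX, k1, k2, k3⟩ := red_unpack ht2
  -- emptiness of the box of `t₂, w₂`
  have box : ∀ z ∈ X, t₂.1 < z.1 → z.1 < a.1 → w₂.2 ≤ z.2 → z.2 = a.2 := by
    intro z hz z1 z2 z3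
    have := hL z hz
    have := hQ2 z hz
    unfold InD at *
    grind
  -- the left ray between `t₂` and `a` is empty
  have ray : ∀ v ∈ X, t₂.1 < v.1 → v.1 < a.1 → v.2 = a.2 → False := by
    intro v hv v1 v2 v3
    have := k3 v hv w₂ hwX (by linarith) (by linarith) (by
      intro z hz
      have := hL z hz
      have := box z hz
      have := hQ2 z hz
      unfold InD at *
      grind)
    grind
  obtain ⟨p, hp, p1, p2, p3⟩ := horiz hnc htX haX c5 c4
  have p4 : p.2 < w₂.2 := by
    by_contra hc
    exact p3 (by rw [c4]; exact box p hp p1 p2 (not_lt.1 hc))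
  have wd := E w₂ hwX c1 c2
  obtain ⟨q, hq, q1, q2, q3, hb⟩ := blue_fix_v hp haX p2 (by linarith) (by
    intro u hu v hv u1 u2 H
    have ha := (H a haX).2 (by unfold InI; grind)
    have hd : ¬ InI u v d₁ := fun h => by
      have := (H d₁ hd1X).1 h
      unfold InI at this
      grind
    have hv' := (H v hv).1 (by unfold InI; grind)
    have b1 := box v hv
    have b2 := ray v hv
    have b3 := E v hv
    have b4 := hQ2 v hv
    unfold InI at ha hd hv'
    grind)
  exact (hiso q a (Or.inl hb)).2 rfl

/-- The case where `t₁` lies above `a`, and `w₁ = s` lies right above `d₁`, is impossible. -/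
lemma no_up_case {X : Finset (ℝ × ℝ)} {a d₁ t₁ w₁ r : ℝ × ℝ}
    (hnc : NonCollinear X) (haX : a ∈ X) (hiso : NotEndpoint X a)
    (hQ2 : ∀ z ∈ X, ¬(z.1 < a.1 ∧ a.2 < z.2))
    (hd1X : d₁ ∈ X) (hd1 : a.1 < d₁.1 ∧ d₁.2 < a.2)
    (ht1 : RedArrow X t₁ w₁)
    (hL : ∀ z ∈ X, (InD t₁ w₁ z ↔ InD a d₁ z))
    (hr : r ∈ X) (hr1 : r.1 = a.1) (hr2 : r.2 < a.2)
    (E : ∀ z ∈ X, z.1 = a.1 → z.2 < a.2 → z.2 < d₁.2)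
    (hrmax : ∀ z ∈ X, z.1 = a.1 → z.2 < a.2 → z.2 ≤ r.2)
    (hs : ∀ z ∈ X, z.2 = a.2 → a.1 < z.1 → w₁.1 ≤ z.1)
    (hC : w₁.2 = a.2 ∧ a.1 < w₁.1 ∧ w₁.1 = d₁.1 ∧ t₁.1 = a.1 ∧ a.2 < t₁.2) : False := by
  obtain ⟨c1, c2, c3, c4, c5⟩ := hC
  obtain ⟨htX, hwX, k1, k2, k3⟩ := red_unpack ht1
  have rd := E r hr hr1 hr2
  -- emptiness of the box of `t₁, w₁`
  have box : ∀ z ∈ X, a.1 < z.1 → z.1 ≤ w₁.1 → a.2 < z.2 → z.2 ≤ t₁.2 → False := by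
    intro z hz z1 z2 z3 z4
    have := hL z hz
    unfold InD at *
    grind
  -- the segment between `a` and `t₁` is empty
  have ray : ∀ v ∈ X, v.1 = a.1 → a.2 < v.2 → v.2 < t₁.2 → False := by
    intro v hv v1 v2 v3
    have := k3 v hv w₁ hwX (by linarith) (by linarith) (by
      intro z hz
      have := hL z hz
      have := box z hz
      have := hQ2 z hz
      unfold InD at *
      grind)
    grind
  obtain ⟨p, hp, p1, p2, p3⟩ := vert hnc haX htX c5 c4.symm
  have p4 : w₁.1 < p.1 := by
    have := box p hp
    have := hQ2 p hp
    grind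
  obtain ⟨v, hv, v1, v2, v3, vmin⟩ := min_fix_u hp (show a.1 < p.1 by linarith) p1
  have vp := vmin p hp (by linarith) p1 fun _ _ => Iff.rfl
  have nt : ¬ InI a v t₁ := by unfold InI; grind
  have nd : ¬ InI a v d₁ := by unfold InI; grind
  have ir : InI a v r := by unfold InI; grind
  have ia : InI a v a := by unfold InI; grind
  have v4 : w₁.1 < v.1 := by
    have := box v hv
    grind
  have hb : BlueArrow X a v := by
    refine blue_pack haX hv v1 v2 fun u hu w hw u1 u2 H => ?_
    have ha := (H a haX).2 ia
    have hrr := (H r hr).2 ir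
    have hu' := (H u hu).1 (by unfold InI; grind)
    have hw' := (H w hw).1 (by unfold InI; grind)
    have ht : ¬ InI u w t₁ := fun h => nt ((H t₁ htX).1 h)
    have hd : ¬ InI u w d₁ := fun h => nd ((H d₁ hd1X).1 h)
    have m : u.1 = a.1 → u.2 = a.2 → v.1 ≤ w.1 ∧ v.2 ≤ w.2 := by
      intro e1 e2
      have e : u = a := Prod.ext e1 e2
      subst e
      exact vmin w hw u1 u2 fun z hz => (H z hz).trans (v3 z hz)
    have bu := box u hu
    have bw := box w hw
    have ru := ray u hu
    have rw' := ray w hw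
    have su := hs u hu
    have sw := hs w hw
    have rmu := hrmax u hu
    -- `u` is not above `w₁`
    have nu : ¬ (w₁.1 ≤ u.1 ∧ w₁.2 ≤ u.2) := by
      rintro ⟨e1, e2⟩
      apply hd
      unfold InI
      left
      constructor <;> linarith
    have nw : ¬ (w.1 ≤ a.1 ∧ w.2 ≤ a.2) := by
      rintro ⟨e1, e2⟩
      apply ht
      unfold InI
      right; right
      constructor <;> linarith
    unfold InI at ha hrr hu' hw' ht hd
    have ua : u.1 ≤ a.1 ∧ u.2 ≤ a.2 := by
      grind
    by_cases hua : u.1 = a.1 ∧ u.2 = a.2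
    · have := m hua.1 hua.2
      exact ⟨this.1, this.2, fun _ _ => ua⟩
    · have ur : u.1 ≤ r.1 ∧ u.2 ≤ r.2 := by grind
      have : v.1 ≤ w.1 ∧ v.2 ≤ w.2 := by
        rcases hw' with h | h | h
        · exact absurd h nw
        · exfalso
          have : w₁.1 ≤ w.1 ∧ w₁.2 ≤ w.2 := by grind
          apply hd
          right; left
          refine ⟨?_, ?_, ?_, ?_⟩ <;> linarith
        · exact h
      exact ⟨this.1, this.2, fun _ _ => ua⟩
  exact (hiso a v (Or.inl hb)).1 rfl

/-- Under the Assumptions, if `d₁ ≠ d₂`, then there are points of `X` directly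
below `a` and directly to the right of `a`; if `r` is the closest point of `X`
below `a` on the vertical line through `a` and `s` is the closest point of `X`
to the right of `a` on the horizontal line through `a`, then `(r,s)` is a blue
arrow, and there is a blue arrow `(r',s)` with `r' ≠ r` and `{r,r'}` a
decreasing pair. -/
theorem two_blue_arrows_of_two_ds (X : Finset (ℝ × ℝ)) (a d₁ d₂ t₁ w₁ t₂ w₂ : ℝ × ℝ)
    (hnc : NonCollinear X) (haX : a ∈ X) (hiso : NotEndpoint X a)
    (hQ2 : ∀ z ∈ X, ¬(z.1 < a.1 ∧ a.2 < z.2))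
    (hQ4 : ∃ z ∈ X, a.1 < z.1 ∧ z.2 < a.2)
    (hd1X : d₁ ∈ X) (hd1 : a.1 < d₁.1 ∧ d₁.2 < a.2)
    (hd1strip : ∀ z ∈ X, ¬(a.1 < z.1 ∧ d₁.2 < z.2 ∧ z.2 < a.2))
    (hd1seg : ∀ z ∈ X, ¬(a.1 < z.1 ∧ z.1 < d₁.1 ∧ z.2 = d₁.2))
    (hd2X : d₂ ∈ X) (hd2 : a.1 < d₂.1 ∧ d₂.2 < a.2)
    (hd2strip : ∀ z ∈ X, ¬(a.1 < z.1 ∧ z.1 < d₂.1 ∧ z.2 < a.2))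
    (hd2seg : ∀ z ∈ X, ¬(z.1 = d₂.1 ∧ d₂.2 < z.2 ∧ z.2 < a.2))
    (ht1 : RedArrow X t₁ w₁) (hl1 : lineThrough X t₁ w₁ = lineThrough X a d₁)
    (ht2 : RedArrow X t₂ w₂) (hl2 : lineThrough X t₂ w₂ = lineThrough X a d₂)
    (hne : d₁ ≠ d₂) :
    (∃ z ∈ X, z.1 = a.1 ∧ z.2 < a.2) ∧
    (∃ z ∈ X, z.2 = a.2 ∧ a.1 < z.1) ∧
    ∀ r s : ℝ × ℝ,
      (r ∈ X ∧ r.1 = a.1 ∧ r.2 < a.2 ∧ ∀ z ∈ X, z.1 = a.1 → z.2 < a.2 → z.2 ≤ r.2) →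
      (s ∈ X ∧ s.2 = a.2 ∧ a.1 < s.1 ∧ ∀ z ∈ X, z.2 = a.2 → a.1 < z.1 → s.1 ≤ z.1) →
      BlueArrow X r s ∧
        ∃ r' ∈ X, r' ≠ r ∧ DecPair r r' ∧ BlueArrow X r' s := by
  have hb12 : d₂.1 < d₁.1 ∧ d₂.2 < d₁.2 := by
    have := ne_coord hne
    have := hd1strip d₂ hd2X
    have := hd1seg d₂ hd2X
    have := hd2strip d₁ hd1X
    have := hd2seg d₁ hd1X
    grind
  obtain ⟨ht1X, hw1X, k1, k2, -⟩ := red_unpack ht1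
  obtain ⟨ht2X, hw2X, k3, k4, -⟩ := red_unpack ht2
  have hL1 := (line_D_iff k1 k2 hd1.1 hd1.2).1 hl1
  have hL2 := (line_D_iff k3 k4 hd2.1 hd2.2).1 hl2
  have i1 := hiso t₁ w₁ (Or.inr ht1)
  have i2 := hiso t₂ w₂ (Or.inr ht2)
  have C1 := d1_cases hnc haX hQ2 hd1X hd1 hd1strip hd1seg hd2X hd2 hb12 ht1
    (ne_coord i1.1) (ne_coord i1.2) hL1
  have E : ∀ z ∈ X, z.1 = a.1 → z.2 < a.2 → z.2 < d₁.2 := by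
    intro z hz z1 z2
    have := hL1 z hz
    unfold InD at this
    grind
  have C2 : t₂.1 = a.1 ∧ t₂.2 < a.2 ∧ d₂.2 < t₂.2 ∧ w₂.1 = d₂.1 ∧ w₂.2 = d₂.2 := by
    rcases d2_cases hnc haX hQ2 hd1X hd1 hd2X hd2 hd2strip hd2seg hb12 ht2
      (ne_coord i2.1) (ne_coord i2.2) hL2 with h | h
    · exact h
    · exact (no_left_case hnc haX hiso hQ2 hd1X hd1 hd2 hb12 ht2 hL2 E h).elim
  have E' : ∀ z ∈ X, z.2 = a.2 → a.1 < z.1 → d₂.1 < z.1 := by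
    intro z hz z1 z2
    have := hL2 z hz
    unfold InD at this
    grind
  refine ⟨⟨t₂, ht2X, C2.1, C2.2.1⟩, ?_, ?_⟩
  · rcases C1 with h | h
    · exact ⟨t₁, ht1X, h.1, h.2.1⟩
    · exact ⟨w₁, hw1X, h.1, h.2.1⟩
  rintro r s ⟨hr, hr1, hr2, hrmax⟩ ⟨hs, hs1, hs2, hsmin⟩
  have rd1 := E r hr hr1 hr2
  have rd2 : d₂.2 < r.2 := lt_of_lt_of_le C2.2.2.1 (hrmax t₂ ht2X C2.1 C2.2.1)
  have sd2 := E' s hs hs1 hs2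
  have sd1 : s.1 < d₁.1 := by
    rcases C1 with h | h
    · exact lt_of_le_of_lt (hsmin t₁ ht1X h.1 h.2.1) h.2.2.1
    · have h1 := hsmin w₁ hw1X h.1 h.2.1
      by_contra hc
      refine no_up_case hnc haX hiso hQ2 hd1X hd1 ht1 hL1 hr hr1 hr2 E hrmax
        (fun z hz z1 z2 => ?_) ⟨h.1, h.2.1, ?_, h.2.2.2.1, h.2.2.2.2⟩
      · linarith [hsmin z hz z1 z2]
      · linarith
  constructor
  · -- every generator of the line of `r, s`
    have key : ∀ u ∈ X, ∀ v ∈ X, u.1 < v.1 → u.2 < v.2 → (∀ z ∈ X, (InI u v z ↔ InI r s z)) →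
        (s.1 ≤ v.1 ∧ s.2 ≤ v.2 ∧ (s.1 = v.1 → s.2 = v.2 → u.1 ≤ r.1 ∧ u.2 ≤ r.2)) ∨
        (v.1 = a.1 ∧ v.2 = a.2) := by
      intro u hu v hv u1 u2 H
      have ha := (H a haX).2 (by unfold InI; grind)
      have hu' := (H u hu).1 (by unfold InI; grind)
      have hv' := (H v hv).1 (by unfold InI; grind)
      have hd : ¬ InI u v d₁ := fun h => by
        have := (H d₁ hd1X).1 h
        unfold InI at this
        grind
      have := hrmax u hu
      have := hrmax v hv
      have := hsmin u hu
      have := hsmin v hv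
      unfold InI at ha hu' hv' hd
      grind
    by_cases hx : ∃ u ∈ X, u.1 < a.1 ∧ u.2 < a.2 ∧ ∀ z ∈ X, (InI u a z ↔ InI r s z)
    · exfalso
      obtain ⟨u, hu, u1, u2, H⟩ := hx
      obtain ⟨q, -, -, -, -, hb⟩ := blue_fix_v hu haX u1 u2 (by
        intro u' hu' v' hv' u3 u4 H'
        have := key u' hu' v' hv' u3 u4 fun z hz => (H' z hz).trans (H z hz)
        grind)
      exact (hiso q a (Or.inl hb)).2 rfl
    · refine blue_pack hr hs (by linarith) (by linarith) fun u hu v hv u1 u2 H => ?_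
      rcases key u hu v hv u1 u2 H with h | ⟨h1, h2⟩
      · exact h
      · exfalso
        have e : v = a := Prod.ext h1 h2
        subst e
        exact hx ⟨u, hu, u1, u2, H⟩
  · obtain ⟨q, hq, q1, q2, q3, hb⟩ := blue_fix_v hd2X hs sd2 (show d₂.2 < s.2 by linarith) (by
      intro u hu v hv u1 u2 H
      have hs' := (H s hs).2 (by unfold InI; grind)
      have hv' := (H v hv).1 (by unfold InI; grind)
      have ha : ¬ InI u v a := fun h => by
        have := (H a haX).1 h
        unfold InI at this
        grind
      have hd : ¬ InI u v d₁ := fun h => by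
        have := (H d₁ hd1X).1 h
        unfold InI at this
        grind
      have := hsmin v hv
      have := hd1strip v hv
      unfold InI at hs' hv' ha hd
      grind)
    have ha : ¬ InI q s a := fun h => by
      have := (q3 a haX).1 h
      unfold InI at this
      grind
    have hrr : ¬ InI q s r := fun h => by
      have := (q3 r hr).1 h
      unfold InI at this
      grind
    have : r.1 < q.1 ∧ q.2 < r.2 := by
      unfold InI at ha hrr
      grind
    have hdec := (decD (p := r) (q := q)).2 this
    exact ⟨q, hq, fun h => hdec.2.2 h.symm, hdec.1, hb⟩
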